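/- For every set C that is not Σ⁰₁, every computable instance T of the cross-constraint problem has a solution (X^i, Y^i)_{i<2} such that C is not Σ⁰₁ relative to (X⁰,Y⁰) ⊕ (X¹,Y¹). -/

import Mathlib

namespace Paper

/-- Codes for oracle Turing machines. -/
inductive OCode : Type
  | zero | succ | left | right | oracle
  | pair (a b : OCode) | comp (a b : OCode) | prec (a b : OCode) | rfind' (a : OCode)

/-- Evaluation of an oracle code with oracle `O`. -/
def oeval (O : ℕ → ℕ) : OCode → ℕ →. ℕ
  | .zero => pure 0
  | .succ => Nat.succ
  | .left => ↑fun n : ℕ => n.unpair.1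
  | .right => ↑fun n : ℕ => n.unpair.2
  | .oracle => ↑fun n : ℕ => O n
  | .pair cf cg => fun n => Nat.pair <$> oeval O cf n <*> oeval O cg n
  | .comp cf cg => fun n => oeval O cg n >>= oeval O cf
  | .prec cf cg =>
    Nat.unpaired fun a n =>
      n.rec (oeval O cf a) fun y IH => do
        let i ← IH
        oeval O cg (Nat.pair a (Nat.pair y i))
  | .rfind' cf =>
    Nat.unpaired fun a m =>
      (Nat.rfind fun n => (fun m => m = 0) <$> oeval O cf (Nat.pair a (n + m))).map (· + m)

/-- A numbering of oracle codes. -/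
def encodeOCode : OCode → ℕ
  | .zero => 0
  | .succ => 1
  | .left => 2
  | .right => 3
  | .oracle => 4
  | .pair a b => 4 * Nat.pair (encodeOCode a) (encodeOCode b) + 5
  | .comp a b => 4 * Nat.pair (encodeOCode a) (encodeOCode b) + 6
  | .prec a b => 4 * Nat.pair (encodeOCode a) (encodeOCode b) + 7
  | .rfind' a => 4 * encodeOCode a + 8

/-- The Turing jump of an oracle. -/
def jump (O : ℕ → ℕ) : Set ℕ :=
  { n | ∃ c : OCode, encodeOCode c = n.unpair.1 ∧ (oeval O c n.unpair.2).Dom }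

/-- `f` is (total) recursive in the oracle `O`. -/
def RecIn (O : ℕ → ℕ) (f : ℕ → ℕ) : Prop :=
  ∃ c : OCode, ∀ n, oeval O c n = Part.some (f n)

/-- The all-zero (trivial, computable) oracle. -/
def zeroO : ℕ → ℕ := fun _ => 0

/-- Characteristic function of a set of naturals. -/
noncomputable def chi (A : Set ℕ) : ℕ → ℕ := A.indicator fun _ => 1

/-- Turing join of two oracles. -/
def joinF (f g : ℕ → ℕ) : ℕ → ℕ := fun n => if n % 2 = 0 then f (n / 2) else g (n / 2)

/-- `A` is Σ⁰₁ relative to the oracle `O` (c.e. in `O`). -/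
def SigmaIn (O : ℕ → ℕ) (A : Set ℕ) : Prop :=
  ∃ c : OCode, ∀ n, n ∈ A ↔ (oeval O c n).Dom

/-- The halting problem `∅′`. -/
noncomputable def emptyJump : Set ℕ := jump zeroO

end Paper
namespace Paper

abbrev Str3 := List (Fin 3)
abbrev StrTup (r : ℕ) := Fin r → List (Fin 2)

/-- A cross-tree `T ⊆ 3^{<ℕ} × (2^{<ℕ})^r`. -/
structure CrossTree (r : ℕ) where
  mem : Set (Str3 × StrTup r)
  len_eq : ∀ p ∈ mem, ∀ i j : Fin r, (p.2 i).length = (p.2 j).length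
  len_le : ∀ p ∈ mem, ∀ i : Fin r, (p.2 i).length ≤ p.1.length
  closed : ∀ p ∈ mem, ∀ q : Str3 × StrTup r, q.1 <+: p.1 → (∀ i, q.2 i <+: p.2 i) →
    (∀ i j : Fin r, (q.2 i).length = (q.2 j).length) →
    (∀ i : Fin r, (q.2 i).length ≤ q.1.length) → q ∈ mem

/-- Length-`n` initial segment of an infinite sequence. -/
def seg {α : Type} (X : ℕ → α) (n : ℕ) : List α := List.ofFn fun i : Fin n => X i

/-- `(X, Y)` is an infinite path of the cross-tree `T`. -/
def IsPath {r : ℕ} (T : CrossTree r) (X : ℕ → Fin 3) (Y : Fin r → ℕ → Fin 2) : Prop :=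
  ∀ n, (seg X n, fun i => seg (Y i) n) ∈ T.mem

/-- The infinite sequence `X` extends the finite string `ρ`. -/
def ExtendsL {α : Type} (X : ℕ → α) (ρ : List α) : Prop :=
  ∀ i : Fin ρ.length, X i = ρ.get i

/-- `T` is left-full below `(ρ, σ)`. -/
def LeftFullBelow {r : ℕ} (T : CrossTree r) (ρ : Str3) (σ : StrTup r) : Prop :=
  ∀ X : ℕ → Fin 3, ExtendsL X ρ →
    ∃ Y : Fin r → ℕ → Fin 2, (∀ i, ExtendsL (Y i) (σ i)) ∧ IsPath T X Y

/-- `T` is left-full (below the pair of empty stems). -/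
def LeftFull {r : ℕ} (T : CrossTree r) : Prop := LeftFullBelow T [] fun _ => []

/-- Encoding of nodes of a cross-tree as natural numbers. -/
def encNode {r : ℕ} (p : Str3 × StrTup r) : ℕ :=
  Nat.pair (Encodable.encode p.1) (Encodable.encode (List.ofFn p.2))

/-- The cross-tree `T` is computable. -/
def TreeComputable {r : ℕ} (T : CrossTree r) : Prop :=
  RecIn zeroO (chi {n | ∃ p ∈ T.mem, encNode p = n})

/-- A solution to the cross-constraint problem on instance `T`: a pair of paths whose
first components are finitely compatible and whose second components are pairwise
infinitely compatible. -/
def CCSolution {r : ℕ} (T : CrossTree r) (X : Fin 2 → ℕ → Fin 3)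
    (Y : Fin 2 → Fin r → ℕ → Fin 2) : Prop :=
  (∀ i : Fin 2, IsPath T (X i) (Y i)) ∧
  (∀ j : Fin 3, {n | X 0 n = j ∧ X 1 n = j}.Finite) ∧
  (∀ s : Fin r, ∃ j : Fin 2, {n | Y 0 s n = j ∧ Y 1 s n = j}.Infinite)

/-- Oracle encoding a path `(X, Y)` of a cross-tree. -/
def solOracle {r : ℕ} (X : ℕ → Fin 3) (Y : Fin r → ℕ → Fin 2) : ℕ → ℕ := fun n =>
  if n.unpair.1 = 0 then (X n.unpair.2 : ℕ)
  else if h : n.unpair.1 - 1 < r then (Y ⟨n.unpair.1 - 1, h⟩ n.unpair.2 : ℕ) else 0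

end Paper

/-!
Suppose that `C` is Σ⁰₁ relative to every solution. For a finite set `κ`, consider the left sides
`stem x ⌢ (x ∘ f)` for all colourings `x : κ → 3` simultaneously. If `f : ℕ → κ` is sufficiently
Cohen generic, `C` is not Σ⁰₁ in `f`, and the cone avoidance basis theorem for Π⁰₁ classes yields
right sides for all of them whose join with `f` still does not enumerate `C`. Two everywhere
distinct colourings `x`, `y` have almost disjoint left sides, so, as they do not give a solution,
some coordinate of their right sides eventually always differs. Choosing one such coordinate
`π(x, y)` for each pair and applying the Baire category theorem, `π` works for all `f` extending
some finite string.

A pair of everywhere distinct colourings is a word over the alphabet of the six pairs of distinct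
colours. If `κ` is large, the Hales–Jewett theorem makes `π` constant, say equal to `s`, on a
combinatorial subspace. Two colourings in the subspace have a third one that is everywhere distinct
from both, and bits take only two values, so the `s`-th right sides of all colourings in the
subspace agree from some position on. At coordinates that already agreed nothing can differ, so `s`
is new. Starting with a large enough `κ`, this produces `r + 1` agreeing coordinates among `r`.
-/

namespace Paper

open Encodable

/-! ### Recursively enumerable predicates -/

section REPred

variable {α β : Type} [Primcodable α] [Primcodable β]

theorem rePred_iff_exists_code {p : α → Prop} :
    REPred p ↔ ∃ c : Nat.Partrec.Code, ∀ a, p a ↔ (c.eval (encode a)).Dom := by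
  constructor
  · intro hp
    obtain ⟨c, hc⟩ := Nat.Partrec.Code.exists_code.1 hp
    exact ⟨c, fun a => by simp [hc, Part.assert]⟩
  · rintro ⟨c, hc⟩
    have hdom : REPred fun a : α => (c.eval (encode a)).Dom :=
      (Nat.Partrec.Code.eval_part.comp (Computable.const c) Computable.encode).dom_re
    exact hdom.of_eq fun a => (hc a).symm

theorem rePred_comp {p : β → Prop} (hp : REPred p) {f : α → β} (hf : Computable f) :
    REPred fun a => p (f a) :=
  Partrec.comp hp hf

theorem rePred_or {p q : α → Prop} (hp : REPred p) (hq : REPred q) :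
    REPred fun a => p a ∨ q a := by
  obtain ⟨k, hk, hdom⟩ := Partrec.merge' hp hq
  refine hk.dom_re.of_eq fun a => (hdom a).2.trans ?_
  simp [Part.assert]

theorem rePred_exists {p : α × β → Prop} (hp : REPred p) : REPred fun a => ∃ b, p (a, b) := by
  obtain ⟨c, hc⟩ := rePred_iff_exists_code.1 hp
  let search (a : α) (k : ℕ) : Option ℕ :=
    (decode (α := β × ℕ) k).bind fun q => Nat.Partrec.Code.evaln q.2 c (encode (a, q.1))
  have hsearch : Primrec₂ search := by
    refine Primrec.option_bind (Primrec.decode.comp Primrec.snd)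
      (Nat.Partrec.Code.primrec_evaln.comp (.pair (.pair ?_ (.const c)) ?_))
    · exact Primrec.snd.comp Primrec.snd
    · exact Primrec.encode.comp
        ((Primrec.fst.comp Primrec.fst).pair (Primrec.fst.comp Primrec.snd))
  refine (Partrec.rfindOpt hsearch.to_comp).dom_re.of_eq fun a =>
    Nat.rfindOpt_dom.trans ?_
  simp only [hc, Part.dom_iff_mem, Nat.Partrec.Code.evaln_complete, search]
  constructor
  · rintro ⟨k, x, hx⟩
    obtain ⟨q, -, hq⟩ := Option.bind_eq_some_iff.1 hx
    exact ⟨q.1, x, q.2, hq⟩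
  · rintro ⟨b, x, t, hx⟩
    exact ⟨encode (b, t), x, by rwa [encodek, Option.bind_some]⟩

theorem exists_primrec_monotone_stages {p : α → Prop} (hp : REPred p) :
    ∃ R : α × ℕ → Prop, PrimrecPred R ∧ (∀ a, Monotone fun k => R (a, k)) ∧
      ∀ a, p a ↔ ∃ k, R (a, k) := by
  obtain ⟨c, hc⟩ := rePred_iff_exists_code.1 hp
  refine ⟨fun q => (Nat.Partrec.Code.evaln q.2 c (encode q.1)).isSome = true, ?_, ?_, ?_⟩
  · exact Primrec.eq.comp (Primrec.option_isSome.comp (Nat.Partrec.Code.primrec_evaln.comp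
      ((Primrec.snd.pair (.const c)).pair (Primrec.encode.comp Primrec.fst)))) (.const true)
  · intro a k l hkl h
    obtain ⟨x, hx⟩ := Option.isSome_iff_exists.1 h
    exact Option.isSome_iff_exists.2 ⟨x, Nat.Partrec.Code.evaln_mono hkl hx⟩
  · intro a
    simp only [hc, Part.dom_iff_mem, Nat.Partrec.Code.evaln_complete, Option.isSome_iff_exists]
    exact exists_comm

theorem rePred_forall_mem_list {p : α × β → Prop} (hp : REPred p) {f : α → List β}
    (hf : Primrec f) : REPred fun a => ∀ b ∈ f a, p (a, b) := by
  obtain ⟨R, hR, hmono, hpR⟩ := exists_primrec_monotone_stages hp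
  have hswap : PrimrecRel fun (b : β) (q : α × ℕ) => R ((q.1, b), q.2) :=
    hR.comp (((Primrec.fst.comp Primrec.snd).pair Primrec.fst).pair
      (Primrec.snd.comp Primrec.snd))
  have hall : PrimrecPred fun q : α × ℕ => ∀ b ∈ f q.1, R ((q.1, b), q.2) :=
    hswap.forall_mem_list.comp (hf.comp Primrec.fst) Primrec.id
  have hall' : REPred fun q : α × ℕ => ∀ b ∈ f q.1, R ((q.1, b), q.2) :=
    hall.computablePred.to_re
  refine (rePred_exists hall').of_eq fun a => ⟨fun ⟨k, hk⟩ b hb => (hpR _).2 ⟨k, hk b hb⟩, ?_⟩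
  intro h
  choose! stage hstage using fun b hb => (hpR (a, b)).1 (h b hb)
  refine ⟨((f a).map stage).foldr max 0, fun b hb => hmono _ ?_ (hstage b hb)⟩
  exact List.le_max_of_le (List.mem_map_of_mem hb) le_rfl

end REPred

/-! ### Oracle computations -/

/-- Evaluation of an oracle code relative to a *partial* oracle. Finite strings act as partial
oracles, and this is how computations relative to a sequence are approximated by computations
relative to its initial segments. -/
def OCode.peval (O : ℕ →. ℕ) : OCode → ℕ →. ℕ
  | .zero => pure 0
  | .succ => Nat.succ
  | .left => ↑fun n : ℕ => n.unpair.1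
  | .right => ↑fun n : ℕ => n.unpair.2
  | .oracle => O
  | .pair a b => fun n => Nat.pair <$> a.peval O n <*> b.peval O n
  | .comp a b => fun n => b.peval O n >>= a.peval O
  | .prec a b => Nat.unpaired fun x n =>
      n.rec (a.peval O x) fun y IH => IH >>= fun i => b.peval O (Nat.pair x (Nat.pair y i))
  | .rfind' a => Nat.unpaired fun x m =>
      (Nat.rfind fun n => (fun k => k = 0) <$> a.peval O (Nat.pair x (n + m))).map (· + m)

theorem OCode.peval_coe (O : ℕ → ℕ) (c : OCode) : c.peval O = oeval O c := by
  induction c with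
  | zero | succ | left | right | oracle => rfl
  | pair a b iha ihb | comp a b iha ihb | prec a b iha ihb =>
    simp only [peval, oeval, iha, ihb]; rfl
  | rfind' a iha => simp only [peval, oeval, iha]; rfl

theorem exists_oeval_eq_code_eval (c : Nat.Partrec.Code) :
    ∃ d : OCode, ∀ O, oeval O d = c.eval := by
  induction c with
  | zero => exact ⟨.zero, fun _ => rfl⟩
  | succ => exact ⟨.succ, fun _ => rfl⟩
  | left => exact ⟨.left, fun _ => rfl⟩
  | right => exact ⟨.right, fun _ => rfl⟩
  | pair _ _ iha ihb =>
    obtain ⟨⟨a, ha⟩, b, hb⟩ := And.intro iha ihb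
    exact ⟨.pair a b, fun O => by simp only [oeval, Nat.Partrec.Code.eval, ha, hb]; rfl⟩
  | comp _ _ iha ihb =>
    obtain ⟨⟨a, ha⟩, b, hb⟩ := And.intro iha ihb
    exact ⟨.comp a b, fun O => by simp only [oeval, Nat.Partrec.Code.eval, ha, hb]; rfl⟩
  | prec _ _ iha ihb =>
    obtain ⟨⟨a, ha⟩, b, hb⟩ := And.intro iha ihb
    exact ⟨.prec a b, fun O => by simp only [oeval, Nat.Partrec.Code.eval, ha, hb]; rfl⟩
  | rfind' _ iha =>
    obtain ⟨a, ha⟩ := iha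
    exact ⟨.rfind' a, fun O => by simp only [oeval, Nat.Partrec.Code.eval, ha]; rfl⟩

section Computability

variable {σ : Type} [Primcodable σ] {f g : σ → ℕ →. ℕ}

theorem partrec₂_prec (hf : Partrec₂ f) (hg : Partrec₂ g) :
    Partrec₂ fun s => Nat.unpaired fun x n =>
      n.rec (f s x) fun y IH => IH >>= fun i => g s (Nat.pair x (Nat.pair y i)) := by
  have hunpair : Primrec fun q : σ × ℕ => q.2.unpair := Primrec.unpair.comp Primrec.snd
  have hbase : Partrec fun q : σ × ℕ => f q.1 q.2.unpair.1 :=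
    hf.comp Computable.fst (Primrec.fst.comp hunpair).to_comp
  have hstep : Partrec₂ fun (q : σ × ℕ) (z : ℕ × ℕ) =>
      g q.1 (Nat.pair q.2.unpair.1 (Nat.pair z.1 z.2)) :=
    hg.comp (Computable.fst.comp Computable.fst)
      (Primrec₂.natPair.comp (Primrec.fst.comp (hunpair.comp Primrec.fst))
        (Primrec₂.natPair.comp (Primrec.fst.comp Primrec.snd)
          (Primrec.snd.comp Primrec.snd))).to_comp
  exact Partrec.nat_rec (Primrec.snd.comp hunpair).to_comp hbase hstep

theorem partrec₂_rfind' (hf : Partrec₂ f) :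
    Partrec₂ fun s => Nat.unpaired fun x m =>
      (Nat.rfind fun n => (fun k => decide (k = 0)) <$> f s (Nat.pair x (n + m))).map (· + m) := by
  have hunpair : Primrec fun q : σ × ℕ => q.2.unpair := Primrec.unpair.comp Primrec.snd
  have hsearch : Partrec fun w : (σ × ℕ) × ℕ =>
      f w.1.1 (Nat.pair w.1.2.unpair.1 (w.2 + w.1.2.unpair.2)) :=
    hf.comp (Computable.fst.comp Computable.fst)
      (Primrec₂.natPair.comp (Primrec.fst.comp (hunpair.comp Primrec.fst))
        (Primrec.nat_add.comp Primrec.snd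
          (Primrec.snd.comp (hunpair.comp Primrec.fst)))).to_comp
  have htest : Partrec₂ fun (q : σ × ℕ) (n : ℕ) =>
      (f q.1 (Nat.pair q.2.unpair.1 (n + q.2.unpair.2))).map fun k => decide (k = 0) :=
    hsearch.map (Primrec.eq.decide.comp Primrec.snd (.const 0)).to_comp
  exact (Partrec.rfind htest).map
    (Primrec.nat_add.comp Primrec.snd (Primrec.snd.comp (hunpair.comp Primrec.fst))).to_comp

theorem OCode.partrec₂_peval {o : σ → ℕ →. ℕ} (ho : Partrec₂ o) (c : OCode) :
    Partrec₂ fun s => c.peval (o s) := by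
  induction c with
  | zero => exact (Computable.const 0).partrec
  | succ => exact (Computable.succ.comp Computable.snd).partrec
  | left => exact (Primrec.fst.comp (Primrec.unpair.comp Primrec.snd)).to_comp.partrec
  | right => exact (Primrec.snd.comp (Primrec.unpair.comp Primrec.snd)).to_comp.partrec
  | oracle => exact ho
  | pair a b iha ihb =>
    have hpair : Partrec fun q : σ × ℕ => (a.peval (o q.1) q.2).bind fun x =>
        (b.peval (o q.1) q.2).map (Nat.pair x) :=
      Partrec.bind iha (Partrec.map (Partrec.comp ihb Computable.fst)
        (Primrec₂.natPair.comp (Primrec.snd.comp Primrec.fst) Primrec.snd).to_comp)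
    exact hpair.of_eq fun q => by simp [peval, Seq.seq, Part.bind_map]
  | comp a b iha ihb =>
    exact Partrec.bind (g := fun (q : σ × ℕ) x => a.peval (o q.1) x) ihb
      (iha.comp (Computable.fst.comp Computable.fst) Computable.snd)
  | prec a b iha ihb => exact partrec₂_prec iha ihb
  | rfind' a iha => exact partrec₂_rfind' iha

end Computability

section Continuity

open OmegaCompletePartialOrder

variable {α : Type} [OmegaCompletePartialOrder α]

theorem mem_apply_ωSup_iff {β : Type} {f : α → Part β} (hf : ωScottContinuous f) (c : Chain α)
    {y : β} : y ∈ f (ωSup c) ↔ ∃ k, y ∈ f (c k) := by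
  rw [hf.map_ωSup, Part.mem_ωSup]
  exact exists_congr fun k => eq_comm.trans Part.eq_some_iff

theorem ωScottContinuous_of_mem_ωSup {β : Type} {f : α → Part β} (hmono : Monotone f)
    (hf : ∀ (c : Chain α) (y : β), y ∈ f (ωSup c) → ∃ k, y ∈ f (c k)) : ωScottContinuous f := by
  refine .of_monotone_map_ωSup ⟨hmono, fun c => le_antisymm (fun y hy => ?_) ?_⟩
  · obtain ⟨k, hk⟩ := hf c y hy
    exact le_ωSup (c.map ⟨f, hmono⟩) k y hk
  · exact ωSup_le _ _ fun k => hmono (le_ωSup c k)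

theorem ωScottContinuous_rfind {p : α → ℕ →. Bool}
    (hp : ∀ n, ωScottContinuous fun x => (p x n : Part Bool)) :
    ωScottContinuous fun x => Nat.rfind (p x) := by
  have hmono : ∀ n, Monotone fun x => (p x n : Part Bool) := fun n => (hp n).monotone
  refine ωScottContinuous_of_mem_ωSup (fun x y hxy n hn => ?_) fun c n hn => ?_
  · obtain ⟨hn, hlt⟩ := Nat.mem_rfind.1 hn
    exact Nat.mem_rfind.2 ⟨hmono n hxy _ hn, fun hm => hmono _ hxy _ (hlt hm)⟩
  · obtain ⟨hn, hlt⟩ := Nat.mem_rfind.1 hn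
    obtain ⟨k, hk⟩ := (mem_apply_ωSup_iff (hp n) c).1 hn
    choose! stage hstage using fun m (hm : m < n) =>
      (mem_apply_ωSup_iff (hp m) c).1 (hlt hm)
    have hle : ∀ m < n, stage m ≤ (Finset.range n).sup stage := fun m hm =>
      Finset.le_sup (Finset.mem_range.2 hm)
    refine ⟨max k ((Finset.range n).sup stage), Nat.mem_rfind.2 ⟨?_, fun {m} hm => ?_⟩⟩
    · exact hmono n (c.monotone (le_max_left _ _)) _ hk
    · exact hmono m (c.monotone ((hle m hm).trans (le_max_right _ _))) _ (hstage m hm)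

theorem OCode.ωScottContinuous_peval (c : OCode) (n : ℕ) :
    ωScottContinuous fun O : ℕ → Part ℕ => c.peval O n := by
  induction c generalizing n with
  | zero | succ | left | right => exact ωScottContinuous.const
  | oracle => exact ωScottContinuous.apply n
  | pair a b iha ihb =>
    exact ContinuousHom.ωScottContinuous.seq (ContinuousHom.ωScottContinuous.map (iha n)) (ihb n)
  | comp a b iha ihb =>
    exact ContinuousHom.ωScottContinuous.bind (ihb n) (.of_apply₂ iha)
  | prec a b iha ihb =>
    simp only [peval, Nat.unpaired]
    induction n.unpair.2 with
    | zero => exact iha _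
    | succ m ih => exact ContinuousHom.ωScottContinuous.bind ih (.of_apply₂ fun i => ihb _)
  | rfind' a iha =>
    exact ContinuousHom.ωScottContinuous.map
      (ωScottContinuous_rfind fun k => ContinuousHom.ωScottContinuous.map (iha _))

end Continuity

theorem sigmaIn_of_rePred {C : Set ℕ} (hC : REPred (· ∈ C)) (O : ℕ → ℕ) : SigmaIn O C := by
  obtain ⟨c, hc⟩ := rePred_iff_exists_code.1 hC
  obtain ⟨d, hd⟩ := exists_oeval_eq_code_eval c
  exact ⟨d, fun n => by rw [hd]; exact hc n⟩

theorem computable_of_recIn {O f : ℕ → ℕ} (hO : Computable O) (hf : RecIn O f) :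
    Computable f := by
  obtain ⟨c, hc⟩ := hf
  have hpeval : Partrec₂ fun (_ : Unit) n => c.peval O n :=
    OCode.partrec₂_peval (o := fun _ => O) (hO.comp Computable.snd).partrec c
  refine (hpeval.comp (Computable.const ()) Computable.id).of_eq fun n => ?_
  rw [OCode.peval_coe]
  exact hc n

/-! ### Finite strings and relative enumerability -/

section Seg

variable {α β : Type}

theorem length_seg (g : ℕ → α) (k : ℕ) : (seg g k).length = k := List.length_ofFn

theorem seg_getElem? (g : ℕ → α) (k i : ℕ) :
    (seg g k)[i]? = if i < k then some (g i) else none := by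
  simp only [seg, List.getElem?_ofFn, dite_eq_ite]

theorem map_seg (φ : α → β) (g : ℕ → α) (k : ℕ) : (seg g k).map φ = seg (fun i => φ (g i)) k :=
  List.map_ofFn

theorem take_seg (g : ℕ → α) (j k : ℕ) : (seg g k).take j = seg g (min j k) := by
  refine List.ext_getElem? fun i => ?_
  rw [List.getElem?_take, seg_getElem?, seg_getElem?]
  split_ifs <;> first | rfl | omega

theorem forall_mem_drop_seg {n : ℕ} {G : ℕ → α} {Q : α → Prop} :
    (∀ k, ∀ a ∈ (seg G k).drop n, Q a) ↔ ∀ i ≥ n, Q (G i) := by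
  simp only [List.mem_iff_getElem?, List.getElem?_drop, seg_getElem?]
  constructor
  · intro hdrop i hi
    exact hdrop (i + 1) (G i) ⟨i - n, by rw [Nat.add_sub_cancel' hi, if_pos i.lt_succ_self]⟩
  · rintro hQ k a ⟨i, hi⟩
    split_ifs at hi
    exact Option.some.inj hi ▸ hQ _ (Nat.le_add_right n i)

/-- The sequence which starts with the string `l` and continues with `g`. -/
def prepend (l : List α) (g : ℕ → α) : ℕ → α := fun i => l.getD i (g (i - l.length))

theorem prepend_apply_of_lt {l : List α} (g : ℕ → α) {i : ℕ} (hi : i < l.length) :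
    prepend l g i = l[i] := List.getD_eq_getElem _ _ hi

theorem prepend_apply_of_le {l : List α} (g : ℕ → α) {i : ℕ} (hi : l.length ≤ i) :
    prepend l g i = g (i - l.length) := List.getD_eq_default _ _ hi

theorem prepend_append (l l' : List α) (g : ℕ → α) :
    prepend (l ++ l') g = prepend l (prepend l' g) := by
  funext i
  rcases lt_or_ge i l.length with hi | hi
  · rw [prepend_apply_of_lt _ hi, prepend_apply_of_lt _ (by simp; omega),
      List.getElem_append_left hi]
  · simp only [prepend, List.getD_append_right _ _ _ _ hi, List.getD_eq_default _ _ hi,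
      List.length_append, Nat.sub_add_eq]

theorem map_prepend (φ : α → β) (l : List α) (g : ℕ → α) (i : ℕ) :
    φ (prepend l g i) = prepend (l.map φ) (fun j => φ (g j)) i := by
  simp only [prepend, List.length_map, List.getD_map]

theorem take_append_seg (l : List α) (g : ℕ → α) (k j : ℕ) :
    (l ++ seg g k).take j = seg (prepend l g) (min j (l.length + k)) := by
  refine List.ext_getElem? fun i => ?_
  rw [List.getElem?_take, seg_getElem?]
  rcases lt_or_ge i l.length with hi | hi
  · rw [List.getElem?_append_left hi, prepend_apply_of_lt _ hi, List.getElem?_eq_getElem hi]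
    split_ifs <;> first | rfl | omega
  · rw [List.getElem?_append_right hi, seg_getElem?, prepend_apply_of_le _ hi]
    split_ifs <;> first | rfl | omega

theorem seg_prepend_length (l : List α) (g : ℕ → α) : seg (prepend l g) l.length = l := by
  have h := take_append_seg l g 0 l.length
  rwa [List.take_left', add_zero, min_self, eq_comm] at h
  rfl

theorem prepend_seg (g : ℕ → α) (k : ℕ) : prepend (seg g k) (fun i => g (k + i)) = g := by
  funext i
  rcases lt_or_ge i k with hi | hi
  · rw [prepend_apply_of_lt _ (by rwa [length_seg])]
    exact List.getElem_ofFn _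
  · rw [prepend_apply_of_le _ (by rwa [length_seg]), length_seg, Nat.add_sub_cancel' hi]

theorem range_prepend (l : List α) : Set.range (prepend l) = {g | seg g l.length = l} := by
  refine Set.ext fun g => ⟨?_, fun hg => ⟨fun i => g (l.length + i), ?_⟩⟩
  · rintro ⟨g, rfl⟩
    exact seg_prepend_length l g
  · conv_lhs => rw [← Set.mem_ofPred_eq.mp hg, length_seg]
    exact prepend_seg g _

section Topology

variable [TopologicalSpace α] [DiscreteTopology α]

theorem isLocallyConstant_seg (k : ℕ) : IsLocallyConstant fun g : ℕ → α => seg g k :=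
  ((IsLocallyConstant.iff_continuous fun (g : ℕ → α) (i : Fin k) => g i).2 (by fun_prop)).comp
    List.ofFn

theorem isOpen_range_prepend (l : List α) : IsOpen (Set.range (prepend l)) := by
  rw [range_prepend]
  exact (isLocallyConstant_seg l.length).isOpen_fiber l

theorem exists_forall_prepend_mem {U : Set (ℕ → α)} (hU : IsOpen U) {f : ℕ → α} (hf : f ∈ U) :
    ∃ m, ∀ g, prepend (seg f m) g ∈ U := by
  obtain ⟨_, ⟨x, m, rfl⟩, hfx, hU⟩ :=
    (PiNat.isTopologicalBasis_cylinders fun _ : ℕ => α).exists_subset_of_mem_open hf hU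
  refine ⟨m, fun g => hU fun i hi => ?_⟩
  rw [prepend_apply_of_lt _ (by rwa [length_seg])]
  exact (List.getElem_ofFn _).trans (hfx i hi)

end Topology

end Seg

/-- `C` is Σ⁰₁ relative to the sequence `g`, phrased as in enumeration reducibility: a (ground
level) r.e. relation between numbers and finite strings enumerates `C` along the initial segments
of `g`. -/
def IsREIn {γ : Type} [Primcodable γ] (g : ℕ → γ) (C : Set ℕ) : Prop :=
  ∃ W : ℕ × List γ → Prop, REPred W ∧ ∀ n, n ∈ C ↔ ∃ k, W (n, seg g k)

section StringOracle

open OmegaCompletePartialOrder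

variable {γ : Type} {e : ℕ → γ → ℕ} {pos : ℕ → ℕ}

/-- The partial oracle with value `e m (u (pos m))` at `m`, undefined where the string `u` is too
short. -/
def stringOracle (e : ℕ → γ → ℕ) (pos : ℕ → ℕ) (u : List γ) : ℕ →. ℕ :=
  fun m => ((u[pos m]?).map (e m) : Option ℕ)

theorem mem_stringOracle_seg {g : ℕ → γ} {k m y : ℕ} :
    y ∈ stringOracle e pos (seg g k) m ↔ pos m < k ∧ e m (g (pos m)) = y := by
  simp only [stringOracle, seg_getElem?, Part.mem_coe]
  split_ifs with h <;> simp [h]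

variable [Primcodable γ]

theorem partrec₂_stringOracle (he : Primrec₂ e) (hpos : Primrec pos) :
    Partrec₂ (stringOracle e pos) := by
  have h : Primrec₂ fun (u : List γ) m => (u[pos m]?).map (e m) :=
    Primrec.option_map (Primrec.list_getElem?.comp Primrec.fst (hpos.comp Primrec.snd))
      (he.comp (Primrec.snd.comp Primrec.fst) Primrec.snd)
  exact h.to_comp.ofOption

theorem isREIn_of_sigmaIn {O : ℕ → ℕ} {C : Set ℕ} {g : ℕ → γ} (he : Primrec₂ e)
    (hpos : Primrec pos) (hO : ∀ m, O m = e m (g (pos m))) (hC : SigmaIn O C) : IsREIn g C := by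
  obtain ⟨c, hc⟩ := hC
  have hpartrec := OCode.partrec₂_peval (partrec₂_stringOracle he hpos) c
  refine ⟨fun q => (c.peval (stringOracle e pos q.2) q.1).Dom,
    (hpartrec.comp Computable.snd Computable.fst).dom_re, fun n => ?_⟩
  let approx : Chain (ℕ → Part ℕ) :=
    ⟨fun k => stringOracle e pos (seg g k), fun k l hkl m y hy => by
      rw [mem_stringOracle_seg] at hy ⊢
      exact ⟨hy.1.trans_le hkl, hy.2⟩⟩
  have hsup : ωSup approx = fun m => Part.some (O m) := by
    refine (ωSup_eq_of_isLUB ⟨?_, fun o ho m y hy => ?_⟩).symm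
    · rintro _ ⟨k, rfl⟩ m y hy
      rw [Part.mem_some_iff, hO]
      exact (mem_stringOracle_seg.1 hy).2.symm
    · obtain rfl : y = O m := Part.mem_some_iff.1 hy
      exact ho ⟨pos m + 1, rfl⟩ m _ (mem_stringOracle_seg.2 ⟨Nat.lt_succ_self _, (hO m).symm⟩)
  rw [hc, ← OCode.peval_coe]
  change (c.peval (fun m => Part.some (O m)) n).Dom ↔ _
  rw [← hsup, Part.dom_iff_mem]
  simp only [mem_apply_ωSup_iff (c.ωScottContinuous_peval n), Part.dom_iff_mem]
  exact exists_comm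

end StringOracle

theorem isREIn_of_isREIn_prepend {γ δ : Type} [Primcodable γ] [Primcodable δ] {C : Set ℕ}
    {φ : γ → δ} (hφ : Primrec φ) {l : List δ} {g : ℕ → γ}
    (hC : IsREIn (prepend l fun i => φ (g i)) C) : IsREIn g C := by
  obtain ⟨W, hW, hWC⟩ := hC
  refine ⟨fun q => ∃ j, W (q.1, (l ++ q.2.map φ).take j), rePred_exists
    (p := fun q : (ℕ × List γ) × ℕ => W (q.1.1, (l ++ q.1.2.map φ).take q.2))
    (rePred_comp hW (Primrec.to_comp ?_)), fun n => ?_⟩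
  · exact (Primrec.fst.comp Primrec.fst).pair (Primrec.list_take.comp Primrec.snd
      (Primrec.list_append.comp (.const l)
        (Primrec.list_map (Primrec.snd.comp Primrec.fst) (hφ.comp Primrec.snd))))
  · simp only [hWC, map_seg, take_append_seg]
    constructor
    · rintro ⟨k, hk⟩
      exact ⟨k, k, by rwa [min_eq_left (Nat.le_add_left _ _)]⟩
    · rintro ⟨k, j, hj⟩
      exact ⟨_, hj⟩

/-! ### Genericity -/

section Genericity

open Filter

variable {γ : Type} [Primcodable γ] {W : ℕ × List γ → Prop}

theorem rePred_exists_seg_prepend [Nonempty γ] (hW : REPred W) (v : List γ) :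
    REPred fun n => ∃ g k, W (n, seg (prepend v g) k) := by
  have htake : REPred fun q : ℕ × List γ × ℕ => W (q.1, (v ++ q.2.1).take q.2.2) := by
    refine rePred_comp hW (Primrec.to_comp (Primrec.fst.pair ?_))
    exact Primrec.list_take.comp (Primrec.snd.comp Primrec.snd)
      (Primrec.list_append.comp (.const v) (Primrec.fst.comp Primrec.snd))
  refine (rePred_exists htake).of_eq fun n => ⟨?_, ?_⟩
  · rintro ⟨⟨u, j⟩, hW⟩
    obtain ⟨c⟩ := ‹Nonempty γ›
    have hu : seg (prepend u fun _ => c) u.length = u := seg_prepend_length u _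
    exact ⟨_, _, by rwa [← hu, take_append_seg] at hW⟩
  · rintro ⟨g, k, hW⟩
    exact ⟨(seg g k, k), by rwa [take_append_seg, min_eq_left (Nat.le_add_left _ _)]⟩

variable [TopologicalSpace γ] [DiscreteTopology γ] {C : Set ℕ}

theorem eventually_residual_not_enumerates (hC : ¬ REPred (· ∈ C)) (hW : REPred W) :
    ∀ᶠ g in residual (ℕ → γ), ¬ ∀ n, n ∈ C ↔ ∃ k, W (n, seg g k) := by
  refine mem_of_superset (residual_of_dense_open isOpen_interior ?_) interior_subset
  refine dense_iff_inter_open.2 fun U hU ⟨f, hf⟩ => ?_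
  obtain ⟨m, hm⟩ := exists_forall_prepend_mem hU hf
  have : Nonempty γ := ⟨f 0⟩
  obtain ⟨n, hn⟩ : ∃ n, ¬ (n ∈ C ↔ ∃ g k, W (n, seg (prepend (seg f m) g) k)) := by
    by_contra! hall
    exact hC ((rePred_exists_seg_prepend hW _).of_eq fun n => (hall n).symm)
  by_cases hnC : n ∈ C
  · have hnW : ∀ g k, ¬ W (n, seg (prepend (seg f m) g) k) := by simpa [hnC] using hn
    refine ⟨prepend (seg f m) fun i => f (m + i), hm _,
      interior_maximal ?_ (isOpen_range_prepend _) ⟨_, rfl⟩⟩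
    rintro _ ⟨g, rfl⟩ henum
    obtain ⟨k, hk⟩ := (henum n).1 hnC
    exact hnW g k hk
  · obtain ⟨g, k, hW⟩ : ∃ g k, W (n, seg (prepend (seg f m) g) k) := by simpa [hnC] using hn
    have hopen : IsOpen {g' : ℕ → γ | W (n, seg g' k)} := isLocallyConstant_seg k {u | W (n, u)}
    refine ⟨prepend (seg f m) g, hm _, interior_maximal ?_ hopen hW⟩
    exact fun g' hg' henum => hnC ((henum n).2 ⟨k, hg'⟩)

theorem eventually_residual_not_isREIn (hC : ¬ REPred (· ∈ C)) :
    ∀ᶠ g in residual (ℕ → γ), ¬ IsREIn g C := by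
  have hcodes : ∀ᶠ g in residual (ℕ → γ), ∀ c : Nat.Partrec.Code,
      ¬ ∀ n, n ∈ C ↔ ∃ k, (c.eval (encode (n, seg g k))).Dom :=
    eventually_countable_forall.2 fun c => eventually_residual_not_enumerates hC
      (W := fun q => (c.eval (encode q)).Dom) (rePred_iff_exists_code.2 ⟨c, fun _ => Iff.rfl⟩)
  filter_upwards [hcodes] with g hg
  rintro ⟨W, hW, hWC⟩
  obtain ⟨c, hc⟩ := rePred_iff_exists_code.1 hW
  exact hg c fun n => by simp only [hWC, hc]

end Genericity

/-! ### Cone avoidance for Π⁰₁ classes -/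

section Sections

variable {α γ β : Type}

theorem primrec_list_sections [Primcodable α] :
    Primrec (List.sections : List (List α) → List (List α)) := by
  have hcons : Primrec₂ fun (_ : List (List α)) (q : List α × List (List α)) =>
      q.2.flatMap fun s => q.1.map fun a => a :: s := by
    refine Primrec.list_flatMap (Primrec.snd.comp Primrec.snd) (Primrec.list_map ?_ ?_)
    · exact Primrec.fst.comp (Primrec.snd.comp Primrec.fst)
    · exact Primrec.list_cons.comp Primrec.snd (Primrec.snd.comp Primrec.fst)
  refine (Primrec.list_foldr Primrec.id (.const [[]]) hcons).of_eq fun L => ?_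
  induction L with
  | nil => rfl
  | cons l L ih => exact congrArg (fun S => S.flatMap fun s => l.map fun a => a :: s) ih

theorem mem_sections_map_prod_univ_iff [Fintype β] {u : List γ} {l : List (γ × β)} :
    l ∈ (u.map fun a => Finset.univ.toList.map (Prod.mk a)).sections ↔ l.map Prod.fst = u := by
  have hmem : ∀ (p : γ × β) (a : γ), p ∈ Finset.univ.toList.map (Prod.mk a) ↔ p.1 = a := by
    rintro ⟨a', b⟩ a
    simp [eq_comm]
  simp only [List.mem_sections, List.forall₂_map_right_iff, hmem]
  rw [← List.forall₂_eq_eq_eq, List.forall₂_map_left_iff]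

theorem exists_seg_prod_eq [Nonempty β] {g : ℕ → γ} {m : ℕ} {l : List (γ × β)}
    (hl : l.map Prod.fst = seg g m) : ∃ h : ℕ → β, seg (fun i => (g i, h i)) m = l := by
  obtain ⟨b⟩ := ‹Nonempty β›
  obtain rfl : l.length = m := by rw [← List.length_map (f := Prod.fst), hl, length_seg]
  let G : ℕ → γ × β := prepend l fun i => (g (l.length + i), b)
  have hG : ∀ i, (G i).1 = g i := fun i => by
    rw [map_prepend Prod.fst, hl, prepend_seg]
  have hpair : (fun i => (g i, (G i).2)) = G := funext fun i => Prod.ext (hG i).symm rfl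
  exact ⟨fun i => (G i).2, (congrArg (seg · l.length) hpair).trans (seg_prepend_length l _)⟩

theorem seg_prodMk (g : ℕ → γ) (h : ℕ → β) (k : ℕ) :
    seg (fun i => (g i, h i)) k = (seg g k).zip (seg h k) :=
  List.ext_getElem (by simp [length_seg]) (by simp [seg])

end Sections

/-- The Π⁰₁(`g`) class of all `h` such that no initial segment of `(g, h)` is bad. -/
def pi01Class {γ β : Type} (g : ℕ → γ) (B : List (γ × β) → Prop) : Set (ℕ → β) :=
  {h | ∀ k, ¬ B (seg (fun i => (g i, h i)) k)}

section Pi01Class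

variable {γ β : Type} {g : ℕ → γ} {B : List (γ × β) → Prop}

theorem pi01Class_or (B' : List (γ × β) → Prop) :
    pi01Class g (fun l => B l ∨ B' l) = pi01Class g B ∩ pi01Class g B' := by
  ext h
  simp only [pi01Class, not_or, forall_and, Set.mem_inter_iff, Set.mem_ofPred_eq]

variable [TopologicalSpace β] [DiscreteTopology β]

theorem isClosed_setOf_seg_prod (k : ℕ) :
    IsClosed {h : ℕ → β | ¬ B (seg (fun i => (g i, h i)) k)} := by
  simp only [seg_prodMk]
  exact isOpen_compl_iff.1 (isLocallyConstant_seg k {v | ¬ B ((seg g k).zip v)}ᶜ)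

theorem isClosed_pi01Class : IsClosed (pi01Class g B) := by
  simp only [pi01Class, Set.ofPred_forall]
  exact isClosed_iInter isClosed_setOf_seg_prod

variable [Finite β]

theorem isClosed_setOf_pi01Class_nonempty [TopologicalSpace γ] [DiscreteTopology γ] :
    IsClosed {g : ℕ → γ | (pi01Class g B).Nonempty} := by
  have hgraph : IsClosed {p : (ℕ → γ) × (ℕ → β) | p.2 ∈ pi01Class p.1 B} := by
    simp only [pi01Class, Set.mem_ofPred_eq]
    rw [Set.ofPred_forall]
    have hpair : Continuous fun (p : (ℕ → γ) × (ℕ → β)) i => (p.1 i, p.2 i) := by fun_prop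
    exact isClosed_iInter fun k => isOpen_compl_iff.1
      (((isLocallyConstant_seg k).comp_continuous hpair) {l | ¬ B l}ᶜ)
  convert isClosedMap_fst_of_compactSpace _ hgraph
  ext g
  simp [Set.Nonempty]

theorem pi01Class_eq_empty_iff [Nonempty β] : pi01Class g B = ∅ ↔
    ∃ m, ∀ l : List (γ × β), l.map Prod.fst = seg g m → ∃ j, B (l.take j) := by
  constructor
  · contrapose!
    intro hlift
    let goodUpTo (m : ℕ) : Set (ℕ → β) := {h | ∀ k ≤ m, ¬ B (seg (fun i => (g i, h i)) k)}
    have hnonempty : ∀ m, (goodUpTo m).Nonempty := by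
      intro m
      obtain ⟨l, hl, hB⟩ := hlift m
      obtain ⟨h, rfl⟩ := exists_seg_prod_eq hl
      exact ⟨h, fun k hk => by rw [← min_eq_left hk, ← take_seg]; exact hB k⟩
    have hclosed : ∀ m, IsClosed (goodUpTo m) := by
      intro m
      simp only [goodUpTo, Set.ofPred_forall]
      exact isClosed_biInter fun k _ => isClosed_setOf_seg_prod k
    obtain ⟨h, hh⟩ := IsCompact.nonempty_iInter_of_sequence_nonempty_isCompact_isClosed
      goodUpTo (fun m h hh k hk => hh k (hk.trans m.le_succ)) hnonempty (hclosed 0).isCompact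
      hclosed
    exact ⟨h, fun k => Set.mem_iInter.1 hh k k le_rfl⟩
  · rintro ⟨m, hm⟩
    refine Set.eq_empty_of_forall_notMem fun h hh => ?_
    obtain ⟨j, hj⟩ := hm (seg (fun i => (g i, h i)) m) (map_seg _ _ _)
    rw [take_seg] at hj
    exact hh _ hj

variable [Primcodable γ] [Primcodable β] {C : Set ℕ}

theorem isREIn_setOf_pi01Class_eq_empty [Nonempty β] {W : ℕ × List (γ × β) → Prop}
    (hW : REPred W) : IsREIn g {n | pi01Class g (fun l => W (n, l)) = ∅} := by
  have := Fintype.ofFinite β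
  refine ⟨fun q => ∀ l ∈ (q.2.map fun a => Finset.univ.toList.map (Prod.mk a)).sections,
    ∃ j, W (q.1, l.take j), ?_, fun n => ?_⟩
  · refine rePred_forall_mem_list (p := fun w : (ℕ × List γ) × List (γ × β) =>
      ∃ j, W (w.1.1, w.2.take j)) ?_ ?_
    · refine rePred_exists (p := fun z : ((ℕ × List γ) × List (γ × β)) × ℕ =>
        W (z.1.1.1, z.1.2.take z.2)) (rePred_comp hW (Primrec.to_comp ?_))
      exact (Primrec.fst.comp (Primrec.fst.comp Primrec.fst)).pair
        (Primrec.list_take.comp Primrec.snd (Primrec.snd.comp Primrec.fst))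
    · exact primrec_list_sections.comp (Primrec.list_map Primrec.snd
        (Primrec.list_map (.const _) (Primrec.snd.comp Primrec.fst |>.pair Primrec.snd)))
  · simp only [Set.mem_ofPred_eq, pi01Class_eq_empty_iff, mem_sections_map_prod_univ_iff]

theorem exists_pi01Class_subclass_not_enumerates (hg : ¬ IsREIn g C) (hB : REPred B)
    (hne : (pi01Class g B).Nonempty) {W : ℕ × List (γ × β) → Prop} (hW : REPred W) :
    ∃ B', REPred B' ∧ (pi01Class g B').Nonempty ∧ pi01Class g B' ⊆ pi01Class g B ∧
      ∀ h ∈ pi01Class g B', ¬ ∀ n, n ∈ C ↔ ∃ k, W (n, seg (fun i => (g i, h i)) k) := by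
  have : Nonempty β := hne.nonempty.map (· 0)
  have hBW : REPred fun q : ℕ × List (γ × β) => B q.2 ∨ W q :=
    rePred_or (rePred_comp hB Computable.snd) hW
  obtain ⟨n, hn⟩ : ∃ n, ¬ (n ∈ C ↔ pi01Class g (fun l => B l ∨ W (n, l)) = ∅) := by
    by_contra! hall
    exact hg (Set.ext hall ▸ isREIn_setOf_pi01Class_eq_empty hBW)
  rw [pi01Class_or] at hn
  by_cases hnC : n ∈ C
  · refine ⟨fun l => B l ∨ W (n, l), rePred_comp hBW ((Computable.const n).pair Computable.id), ?_⟩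
    rw [pi01Class_or]
    refine ⟨Set.nonempty_iff_ne_empty.2 (by tauto), Set.inter_subset_left, fun h hh henum => ?_⟩
    obtain ⟨k, hk⟩ := (henum n).1 hnC
    exact hh.2 k hk
  · have hempty : pi01Class g B ∩ pi01Class g (fun l => W (n, l)) = ∅ := by tauto
    refine ⟨B, hB, hne, subset_rfl, fun h hh henum => ?_⟩
    refine Set.eq_empty_iff_forall_notMem.1 hempty h ⟨hh, fun k hk => hnC ((henum n).2 ⟨k, hk⟩)⟩

theorem exists_mem_pi01Class_not_isREIn (hg : ¬ IsREIn g C) (hB : REPred B)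
    (hne : (pi01Class g B).Nonempty) :
    ∃ h ∈ pi01Class g B, ¬ IsREIn (fun i => (g i, h i)) C := by
  let Stage := {B : List (γ × β) → Prop // REPred B ∧ (pi01Class g B).Nonempty}
  have hstep : ∀ (c : Nat.Partrec.Code) (S : Stage), ∃ S' : Stage,
      pi01Class g S'.1 ⊆ pi01Class g S.1 ∧ ∀ h ∈ pi01Class g S'.1,
        ¬ ∀ n, n ∈ C ↔ ∃ k, (c.eval (encode (n, seg (fun i => (g i, h i)) k))).Dom := by
    rintro c ⟨B, hB, hne⟩
    obtain ⟨B', hB', hne', hsub, hB'C⟩ := exists_pi01Class_subclass_not_enumerates hg hB hne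
      (W := fun q => (c.eval (encode q)).Dom) (rePred_iff_exists_code.2 ⟨c, fun _ => Iff.rfl⟩)
    exact ⟨⟨B', hB', hne'⟩, hsub, hB'C⟩
  choose next hsub hnext using hstep
  let stage : ℕ → Stage := Nat.rec ⟨B, hB, hne⟩ fun n S => (decode n).elim S fun c => next c S
  have hanti : ∀ n, pi01Class g (stage (n + 1)).1 ⊆ pi01Class g (stage n).1 := fun n => by
    change pi01Class g ((decode n).elim (stage n) fun c => next c (stage n)).1 ⊆ _
    cases decode (α := Nat.Partrec.Code) n with
    | none => exact subset_rfl
    | some c => exact hsub c _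
  obtain ⟨h, hh⟩ := IsCompact.nonempty_iInter_of_sequence_nonempty_isCompact_isClosed
    (fun n => pi01Class g (stage n).1) hanti (fun n => (stage n).2.2)
    isClosed_pi01Class.isCompact fun _ => isClosed_pi01Class
  rw [Set.mem_iInter] at hh
  refine ⟨h, hh 0, ?_⟩
  rintro ⟨W, hW, hWC⟩
  obtain ⟨c, hc⟩ := rePred_iff_exists_code.1 hW
  have hstage : stage (encode c + 1) = next c (stage (encode c)) := by simp [stage]
  refine hnext c (stage (encode c)) h (hstage ▸ hh (encode c + 1)) fun n => ?_
  simp only [hWC, hc]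

end Pi01Class

/-! ### Joint right sides -/

/-- The bits at one position of a tuple `(Y_s)_{s < r}` of binary sequences. -/
abbrev Column (r : ℕ) := Fin r → Fin 2

/-- The node `(ρ, σ)` whose right side `σ` is given as a string of columns. -/
def columnNode {r : ℕ} (u : List (Fin 3) × List (Column r)) : Str3 × StrTup r :=
  (u.1, fun s => u.2.map fun a => a s)

section TreeComputable

variable {r : ℕ}

theorem encNode_injective : Function.Injective (encNode (r := r)) := fun p q h => by
  obtain ⟨hleft, hright⟩ := Nat.pair_eq_pair.1 h
  exact Prod.ext (encode_injective hleft) (List.ofFn_injective (encode_injective hright))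

theorem primrec_encNode_columnNode :
    Primrec fun u : List (Fin 3) × List (Column r) => encNode (columnNode u) := by
  have hright : Primrec fun u : List (Fin 3) × List (Column r) => List.ofFn (columnNode u).2 :=
    Primrec.list_ofFn fun s => Primrec.list_map Primrec.snd
      ((Primrec.dom_finite fun a : Column r => a s).comp Primrec.snd)
  exact Primrec₂.natPair.comp (Primrec.encode.comp Primrec.fst) (Primrec.encode.comp hright)

theorem chi_encNode_eq_one_iff {S : Set (Str3 × StrTup r)} {p : Str3 × StrTup r} :
    chi {n | ∃ p ∈ S, encNode p = n} (encNode p) = 1 ↔ p ∈ S := by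
  change chi (encNode '' S) (encNode p) = 1 ↔ p ∈ S
  rw [← encNode_injective.mem_set_image (s := S)]
  by_cases hp : encNode p ∈ encNode '' S <;> simp [chi, hp]

theorem computablePred_columnNode_mem {T : CrossTree r} (hT : TreeComputable T) :
    ComputablePred fun u : List (Fin 3) × List (Column r) => columnNode u ∈ T.mem := by
  have hchi := computable_of_recIn (Computable.const 0) hT
  have hone : ComputablePred fun u : List (Fin 3) × List (Column r) =>
      chi {n | ∃ p ∈ T.mem, encNode p = n} (encNode (columnNode u)) = 1 :=
    ⟨inferInstance, Primrec.eq.decide.to_comp.comp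
      (hchi.comp primrec_encNode_columnNode.to_comp) (Computable.const 1)⟩
  exact hone.of_eq fun u => chi_encNode_eq_one_iff

end TreeComputable

/-- A finite string of the pairs `(F k, h k)` is bad if, for some index `x`, the node it yields lies
outside `T`, or if one of its columns from position `n` on violates `P`. -/
def jointBad {r : ℕ} {ι : Type} (T : CrossTree r) (n : ℕ) (P : (ι → Column r) → Prop)
    (l : List ((ι → Fin 3) × (ι → Column r))) : Prop :=
  (∃ x, columnNode (l.map fun a => a.1 x, l.map fun a => a.2 x) ∉ T.mem) ∨
    ∃ a ∈ l.drop n, ¬ P a.2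

/-- The simultaneous right sides `h` for the family of left sides `F`, one left side for each index
`x : ι`, whose columns satisfy `P` from position `n` on. -/
def jointPaths {r : ℕ} {ι : Type} (T : CrossTree r) (n : ℕ) (P : (ι → Column r) → Prop)
    (F : ℕ → ι → Fin 3) : Set (ℕ → ι → Column r) :=
  pi01Class F (jointBad T n P)

section JointPaths

variable {r : ℕ} {T : CrossTree r} {ι : Type} {n : ℕ} {P : (ι → Column r) → Prop}
  {F : ℕ → ι → Fin 3} {h : ℕ → ι → Column r}

theorem mem_jointPaths_iff : h ∈ jointPaths T n P F ↔
    (∀ x, IsPath T (fun k => F k x) fun s k => h k x s) ∧ ∀ i ≥ n, P (h i) := by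
  have hP := forall_mem_drop_seg (n := n) (G := fun i => (F i, h i)) (Q := fun a => P a.2)
  simp only [← hP, jointPaths, pi01Class, jointBad, IsPath, columnNode, not_or, not_exists, not_not,
    not_and, map_seg, Set.mem_ofPred_eq, forall_and]
  exact and_congr_left' forall_comm

theorem jointPaths_inter_subset {n' : ℕ} {P' : (ι → Column r) → Prop} :
    jointPaths T n P F ∩ jointPaths T n' P' F ⊆
      jointPaths T (max n n') (fun b => P b ∧ P' b) F := by
  simp only [Set.subset_def, Set.mem_inter_iff, mem_jointPaths_iff]
  rintro h ⟨⟨hpath, hP⟩, -, hP'⟩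
  exact ⟨hpath, fun i hi => ⟨hP i (le_of_max_le_left hi), hP' i (le_of_max_le_right hi)⟩⟩

variable [Finite ι] [Primcodable ι] [Primcodable (ι → Fin 3)] [Primcodable (ι → Column r)]

theorem rePred_jointBad (hT : TreeComputable T) : REPred (jointBad T n P) := by
  refine rePred_or (rePred_exists
    (p := fun w : List ((ι → Fin 3) × (ι → Column r)) × ι =>
      columnNode (w.1.map fun a => a.1 w.2, w.1.map fun a => a.2 w.2) ∉ T.mem) ?_) ?_
  · refine rePred_comp (computablePred_columnNode_mem hT).not.to_re (Primrec.to_comp ?_)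
    have hmap {δ : Type} [Primcodable δ] (φ : ((ι → Fin 3) × (ι → Column r)) × ι → δ) :
        Primrec fun w : List ((ι → Fin 3) × (ι → Column r)) × ι => w.1.map fun a => φ (a, w.2) :=
      Primrec.list_map Primrec.fst ((Primrec.dom_finite φ).comp
        (Primrec.snd.pair (Primrec.snd.comp Primrec.fst)))
    exact (hmap fun q => q.1.1 q.2).pair (hmap fun q => q.1.2 q.2)
  · classical
    have hviolates : PrimrecPred fun a : (ι → Fin 3) × (ι → Column r) => ¬ P a.2 :=
      (Primrec.dom_finite _).primrecPred
    exact (hviolates.exists_mem_list.comp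
      (Primrec.list_drop.comp (.const n) Primrec.id)).computablePred.to_re

theorem exists_mem_jointPaths_not_isREIn (hT : TreeComputable T) {C : Set ℕ} (hF : ¬ IsREIn F C)
    (hne : (jointPaths T n P F).Nonempty) :
    ∃ h ∈ jointPaths T n P F, ¬ IsREIn (fun k => (F k, h k)) C :=
  exists_mem_pi01Class_not_isREIn hF (rePred_jointBad hT) hne

end JointPaths

/-- `C` is not Σ⁰₁ relative to some solution of the cross-constraint instance `T`. -/
def HasSolutionPreserving {r : ℕ} (T : CrossTree r) (C : Set ℕ) : Prop :=
  ∃ (X : Fin 2 → ℕ → Fin 3) (Y : Fin 2 → Fin r → ℕ → Fin 2), CCSolution T X Y ∧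
    ¬ SigmaIn (joinF (solOracle (X 0) (Y 0)) (solOracle (X 1) (Y 1))) C

/-- Row `i` of the path encoded by `solOracle`, at a position with left value `c` and column `a`:
row `0` is the left side and row `s + 1` the `s`-th right side. -/
def rowEntry {r : ℕ} (c : Fin 3) (a : Column r) (i : ℕ) : ℕ :=
  ((c : ℕ) :: List.ofFn fun s => (a s : ℕ)).getD i 0

section Solutions

variable {r : ℕ} {T : CrossTree r} {ι : Type} {F : ℕ → ι → Fin 3} {h : ℕ → ι → Column r}
  {C : Set ℕ}

theorem solOracle_eq_rowEntry (X : ℕ → Fin 3) (Y : Fin r → ℕ → Fin 2) (m : ℕ) :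
    solOracle X Y m = rowEntry (X m.unpair.2) (fun s => Y s m.unpair.2) m.unpair.1 := by
  rcases hi : m.unpair.1 with _ | i
  · simp [solOracle, rowEntry, hi]
  · by_cases hir : i < r <;> simp [solOracle, rowEntry, hi, hir]

theorem exists_eventually_ne_of_finite_agreement {y y' : ℕ → Column r}
    (hfin : ¬ ∀ s : Fin r, ∃ j : Fin 2, {k | y k s = j ∧ y' k s = j}.Infinite) :
    ∃ s, ∀ᶠ k in Filter.atTop, y k s ≠ y' k s := by
  push Not at hfin
  obtain ⟨s, hs⟩ := hfin
  refine ⟨s, ?_⟩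
  rw [← Nat.cofinite_eq_atTop, Filter.eventually_cofinite]
  exact (Set.finite_iUnion hs).subset fun k hk => Set.mem_iUnion.2
    ⟨y k s, rfl, (not_not.1 hk).symm⟩

variable [Finite ι] [Primcodable (ι → Fin 3)] [Primcodable (ι → Column r)]

theorem isREIn_of_sigmaIn_joinF (x y : ι)
    (hC : SigmaIn (joinF (solOracle (fun k => F k x) fun s k => h k x s)
      (solOracle (fun k => F k y) fun s k => h k y s)) C) :
    IsREIn (fun k => (F k, h k)) C := by
  have hhalf : Primrec fun m : ℕ => (m / 2).unpair :=
    Primrec.unpair.comp (Primrec.nat_div.comp Primrec.id (.const 2))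
  have hrow (z : ι) : Primrec₂ fun (m : ℕ) (a : (ι → Fin 3) × (ι → Column r)) =>
      rowEntry (a.1 z) (a.2 z) (m / 2).unpair.1 :=
    (Primrec.list_getD 0).comp
      ((Primrec.dom_finite fun a : (ι → Fin 3) × (ι → Column r) =>
        (a.1 z : ℕ) :: List.ofFn fun s => (a.2 z s : ℕ)).comp Primrec.snd)
      (Primrec.fst.comp (hhalf.comp Primrec.fst))
  have heven : PrimrecPred fun q : ℕ × ((ι → Fin 3) × (ι → Column r)) => q.1 % 2 = 0 :=
    Primrec.eq.comp (Primrec.nat_mod.comp Primrec.fst (.const 2)) (.const 0)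
  have hentry : Primrec₂ fun (m : ℕ) (a : (ι → Fin 3) × (ι → Column r)) =>
      if m % 2 = 0 then rowEntry (a.1 x) (a.2 x) (m / 2).unpair.1
      else rowEntry (a.1 y) (a.2 y) (m / 2).unpair.1 := Primrec.ite heven (hrow x) (hrow y)
  refine isREIn_of_sigmaIn hentry (Primrec.snd.comp hhalf) (fun m => ?_) hC
  simp only [joinF, solOracle_eq_rowEntry]

theorem exists_eventually_ne_of_not_hasSolutionPreserving (hno : ¬ HasSolutionPreserving T C)
    (hpath : ∀ x, IsPath T (fun k => F k x) fun s k => h k x s)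
    (hFh : ¬ IsREIn (fun k => (F k, h k)) C) {x y : ι}
    (hxy : ∀ᶠ k in Filter.atTop, F k x ≠ F k y) :
    ∃ s, ∀ᶠ k in Filter.atTop, h k x s ≠ h k y s := by
  refine exists_eventually_ne_of_finite_agreement fun hinf => hno ?_
  refine ⟨![fun k => F k x, fun k => F k y],
    ![fun s k => h k x s, fun s k => h k y s], ⟨?_, fun j => ?_, hinf⟩,
    fun hC => hFh (isREIn_of_sigmaIn_joinF x y hC)⟩
  · exact Fin.forall_fin_two.2 ⟨hpath x, hpath y⟩
  · rw [← Nat.cofinite_eq_atTop, Filter.eventually_cofinite] at hxy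
    exact hxy.subset fun k hk hne => hne (hk.1.trans hk.2.symm)

end Solutions

/-! ### Forcing -/

/-- The left sides `x ↦ stem x ⌢ (x ∘ f)`, one for each colouring `x` of `κ`. -/
def leftSides {κ : Type} (stem : List ((κ → Fin 3) → Fin 3)) (f : ℕ → κ) :
    ℕ → (κ → Fin 3) → Fin 3 :=
  prepend stem fun i x => x (f i)

/-- Every `f : ℕ → κ` has a simultaneous right side for the left sides `stem x ⌢ (x ∘ f)` whose
columns satisfy `P` from position `n` on. This is the forcing condition of the construction. -/
def JointlyExtendible {r : ℕ} {κ : Type} (T : CrossTree r) (stem : List ((κ → Fin 3) → Fin 3))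
    (n : ℕ) (P : ((κ → Fin 3) → Column r) → Prop) : Prop :=
  ∀ f : ℕ → κ, (jointPaths T n P (leftSides stem f)).Nonempty

/-- The pairs of distinct colours. -/
abbrev DistinctPair := {p : Fin 3 × Fin 3 // p.1 ≠ p.2}

/-- For every `ε`, the columns of the everywhere distinct colourings `fst ∘ ε` and `snd ∘ ε` differ
at the coordinate `π ε`. -/
def Separates {r : ℕ} {κ : Type} (π : (κ → DistinctPair) → Fin r)
    (b : (κ → Fin 3) → Column r) : Prop :=
  ∀ ε : κ → DistinctPair, b (fun e => (ε e).1.1) (π ε) ≠ b (fun e => (ε e).1.2) (π ε)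

section Forcing

open Filter

variable {κ : Type} {stem : List ((κ → Fin 3) → Fin 3)}

theorem leftSides_append_map (v : List κ) (f : ℕ → κ) :
    leftSides (stem ++ v.map fun e x => x e) f = leftSides stem (prepend v f) := by
  rw [leftSides, prepend_append]
  refine congrArg (prepend stem) (funext fun i => ?_)
  exact (map_prepend (fun e (x : κ → Fin 3) => x e) v f i).symm

theorem continuous_leftSides [TopologicalSpace κ] [DiscreteTopology κ] :
    Continuous (leftSides stem) := by
  refine continuous_pi fun i => ?_
  obtain hi | hi := lt_or_ge i stem.length
  · exact continuous_const.congr fun f => (prepend_apply_of_lt _ hi).symm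
  · exact ((continuous_of_discreteTopology (f := fun e (x : κ → Fin 3) => x e)).comp
      (continuous_apply (i - stem.length))).congr fun f =>
        (prepend_apply_of_le (fun i x => x (f i)) hi).symm

theorem exists_forall_prepend_mem_of_residual {ι : Type} [Countable ι] [TopologicalSpace κ]
    [DiscreteTopology κ] [Finite κ] [Nonempty κ] {D : ι → Set (ℕ → κ)} (hD : ∀ i, IsClosed (D i))
    (hcover : ∀ᶠ f in residual (ℕ → κ), ∃ i, f ∈ D i) : ∃ i v, ∀ f, prepend v f ∈ D i := by
  obtain ⟨G, hGD, hG, hdense⟩ := mem_residual.1 hcover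
  obtain ⟨f, hf⟩ := (hG.dense_iUnion_interior_of_closed hdense hD fun f hf =>
    Set.mem_iUnion.2 (hGD hf)).nonempty
  obtain ⟨i, hi⟩ := Set.mem_iUnion.1 hf
  obtain ⟨m, hm⟩ := exists_forall_prepend_mem isOpen_interior hi
  exact ⟨i, seg f m, fun g => interior_subset (hm g)⟩

variable [Finite κ] [Primcodable κ] [Primcodable (κ → Fin 3)]
  [Primcodable ((κ → Fin 3) → Fin 3)] {r : ℕ} [Primcodable ((κ → Fin 3) → Column r)]
  {T : CrossTree r} {C : Set ℕ} {n : ℕ} {P : ((κ → Fin 3) → Column r) → Prop}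

theorem exists_separates_of_not_isREIn (hT : TreeComputable T) (hno : ¬ HasSolutionPreserving T C)
    {f : ℕ → κ} (hf : ¬ IsREIn f C) (hne : (jointPaths T n P (leftSides stem f)).Nonempty) :
    ∃ (π : (κ → DistinctPair) → Fin r) (n' : ℕ),
      (jointPaths T n' (fun b => P b ∧ Separates π b) (leftSides stem f)).Nonempty := by
  have hF : ¬ IsREIn (leftSides stem f) C := fun h =>
    hf (isREIn_of_isREIn_prepend (Primrec.dom_finite fun e (x : κ → Fin 3) => x e) h)
  obtain ⟨h, hh, hFh⟩ := exists_mem_jointPaths_not_isREIn hT hF hne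
  have hpath := (mem_jointPaths_iff.1 hh).1
  have hdistinct (ε : κ → DistinctPair) : ∀ᶠ k in atTop,
      leftSides stem f k (fun e => (ε e).1.1) ≠ leftSides stem f k (fun e => (ε e).1.2) := by
    filter_upwards [eventually_ge_atTop stem.length] with k hk
    simpa only [leftSides, prepend_apply_of_le _ hk] using (ε (f (k - stem.length))).2
  choose π hπ using fun ε =>
    exists_eventually_ne_of_not_hasSolutionPreserving hno hpath hFh (hdistinct ε)
  obtain ⟨m, hm⟩ := eventually_atTop.1 (eventually_all.2 hπ)
  exact ⟨π, max n m, h, jointPaths_inter_subset ⟨hh, mem_jointPaths_iff.2 ⟨hpath, hm⟩⟩⟩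

end Forcing

open Filter in
theorem JointlyExtendible.exists_separates {κ : Type} [Finite κ] [Nonempty κ] {r : ℕ}
    {T : CrossTree r} {C : Set ℕ} {n : ℕ} {P : ((κ → Fin 3) → Column r) → Prop}
    {stem : List ((κ → Fin 3) → Fin 3)} (hstem : JointlyExtendible T stem n P)
    (hT : TreeComputable T) (hC : ¬ REPred (· ∈ C)) (hno : ¬ HasSolutionPreserving T C) :
    ∃ (stem' : List ((κ → Fin 3) → Fin 3)) (π : (κ → DistinctPair) → Fin r) (n' : ℕ),
      JointlyExtendible T stem' n' fun b => P b ∧ Separates π b := by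
  let primcodable (α : Type) [Finite α] : Primcodable α := .ofEquiv _ (Finite.equivFin α)
  let := primcodable κ
  let := primcodable (κ → Fin 3)
  let := primcodable ((κ → Fin 3) → Fin 3)
  let := primcodable ((κ → Fin 3) → Column r)
  let : TopologicalSpace κ := ⊥
  have : DiscreteTopology κ := ⟨rfl⟩
  let D (q : ((κ → DistinctPair) → Fin r) × ℕ) : Set (ℕ → κ) :=
    {f | (jointPaths T q.2 (fun b => P b ∧ Separates q.1 b) (leftSides stem f)).Nonempty}
  have hD (q) : IsClosed (D q) :=
    isClosed_setOf_pi01Class_nonempty.preimage continuous_leftSides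
  have hcover : ∀ᶠ f in residual (ℕ → κ), ∃ q, f ∈ D q :=
    (eventually_residual_not_isREIn hC).mono fun f hf => by
      obtain ⟨π, n', hne⟩ := exists_separates_of_not_isREIn hT hno hf (hstem f)
      exact ⟨(π, n'), hne⟩
  obtain ⟨⟨π, n'⟩, v, hv⟩ := exists_forall_prepend_mem_of_residual hD hcover
  exact ⟨stem ++ v.map fun e x => x e, π, n', fun f => leftSides_append_map v f ▸ hv f⟩

/-! ### Combinatorial subspaces -/

open Combinatorics

section Subspaces

variable {η α β κ : Type}

theorem exists_nonempty_exists_subspace_eq (η α σ : Type) [Finite η] [Nonempty η] [Finite α]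
    [Finite σ] : ∃ (κ : Type) (_ : Finite κ) (_ : Nonempty κ), ∀ c : (κ → α) → σ,
      ∃ l : Subspace η α κ, ∀ ε ε', c (l ε) = c (l ε') := by
  -- With the extra colour there is a colouring, hence a subspace of `κ → α`, even if `σ` is empty.
  obtain ⟨κ, _, hκ⟩ := Subspace.exists_mono_in_high_dimension α (Option σ) η
  have hne : Nonempty κ := by
    obtain ⟨l, -⟩ := hκ fun _ => none
    exact (l.proper (Classical.arbitrary η)).nonempty
  refine ⟨κ, inferInstance, hne, fun c => ?_⟩
  obtain ⟨l, d, hd⟩ := hκ fun ε => some (c ε)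
  exact ⟨l, fun ε ε' => Option.some.inj ((hd ε).trans (hd ε').symm)⟩

/-- The image of a combinatorial subspace of `κ → α` under `φ : α → β`: its constant coordinates
are mapped by `φ`, its directions are kept. -/
def mapSubspace (φ : α → β) (l : Subspace η α κ) : Subspace η β κ where
  idxFun i := (l.idxFun i).map φ id
  proper e := (l.proper e).imp fun i hi => by rw [hi, Sum.map_inr, id]

theorem mapSubspace_comp (φ : α → β) (l : Subspace η α κ) (ε : η → α) :
    mapSubspace φ l (φ ∘ ε) = φ ∘ l ε := by
  funext i
  cases hi : l.idxFun i <;> simp [mapSubspace, Subspace.coe_apply, hi]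

end Subspaces

/-- The columns `b x` all have the same bits at the coordinates in `S`. -/
def AgreesOn {r : ℕ} {ι : Type} (S : Finset (Fin r)) (b : ι → Column r) : Prop :=
  ∀ s ∈ S, ∀ x x', b x s = b x' s

section ConstantCoordinates

variable {r : ℕ} {T : CrossTree r} {η κ : Type} {n : ℕ} {π : (κ → DistinctPair) → Fin r}
  {b : (κ → Fin 3) → Column r} {S : Finset (Fin r)} {s : Fin r}

theorem Separates.notMem_of_agreesOn (hπ : Separates π b) (hS : AgreesOn S b)
    (ε : κ → DistinctPair) : π ε ∉ S :=
  fun hmem => hπ ε (hS _ hmem _ _)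

theorem Separates.apply_mapSubspace_eq (hπ : Separates π b) {l : Subspace η DistinctPair κ}
    (hl : ∀ ε, π (l ε) = s) (y y' : η → Fin 3) :
    b (mapSubspace (fun p => p.1.1) l y) s = b (mapSubspace (fun p => p.1.1) l y') s := by
  have hne (u z : η → Fin 3) (huz : ∀ e, u e ≠ z e) :
      b (mapSubspace (fun p => p.1.1) l u) s ≠ b (mapSubspace (fun p => p.1.2) l z) s := by
    let ε : η → DistinctPair := fun e => ⟨(u e, z e), huz e⟩
    have hu : mapSubspace (fun p => p.1.1) l u = fun e => (l ε e).1.1 := mapSubspace_comp _ l ε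
    have hz : mapSubspace (fun p => p.1.2) l z = fun e => (l ε e).1.2 := mapSubspace_comp _ l ε
    rw [hu, hz, ← hl ε]
    exact hπ (l ε)
  -- A colouring `z` distinct from both `y` and `y'`; the bits at `y` and `y'` both differ from the
  -- one at `z`, and there are only two bits.
  have hthird : ∀ c d : Fin 3, ∃ a, c ≠ a ∧ d ≠ a := by decide
  choose z hyz hy'z using fun e => hthird (y e) (y' e)
  have := hne y z hyz
  have := hne y' z hy'z
  omega

theorem JointlyExtendible.comp_subspace {stem : List ((κ → Fin 3) → Fin 3)}
    {P : ((κ → Fin 3) → Column r) → Prop} {P' : ((η → Fin 3) → Column r) → Prop}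
    (hstem : JointlyExtendible T stem n P) (L : Subspace η (Fin 3) κ)
    (hP : ∀ b, P b → P' fun y => b (L y)) :
    JointlyExtendible T (stem.map fun c y => c (L y)) n P' := by
  intro f
  choose rep hrep using L.proper
  obtain ⟨h, hh⟩ := hstem fun i => rep (f i)
  rw [mem_jointPaths_iff] at hh
  refine ⟨fun k y => h k (L y), mem_jointPaths_iff.2 ⟨fun y => ?_, fun i hi => hP _ (hh.2 i hi)⟩⟩
  have hleft (k : ℕ) : leftSides (stem.map fun c y => c (L y)) f k y =
      leftSides stem (fun i => rep (f i)) k (L y) := by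
    rw [leftSides, leftSides, map_prepend (fun c : (η → Fin 3) → Fin 3 => c y),
      map_prepend (fun c : (κ → Fin 3) → Fin 3 => c (L y)), List.map_map]
    simp only [Subspace.apply_inr (hrep _), Function.comp_def]
  simpa only [hleft] using hh.1 (L y)

theorem LeftFull.jointlyExtendible (hT : LeftFull T) :
    JointlyExtendible T ([] : List ((κ → Fin 3) → Fin 3)) 0 (AgreesOn ∅) := by
  intro f
  choose Y hY using fun x : κ → Fin 3 => hT (fun i => x (f i)) fun i => i.elim0
  exact ⟨fun k x s => Y x s k, mem_jointPaths_iff.2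
    ⟨fun x => (hY x).2, fun _ _ s hs => absurd hs (Finset.notMem_empty s)⟩⟩

theorem exists_jointlyExtendible_agreesOn_insert (hT : TreeComputable T) {C : Set ℕ}
    (hC : ¬ REPred (· ∈ C)) (hno : ¬ HasSolutionPreserving T C) [Nonempty κ] [Finite κ]
    {stem : List ((κ → Fin 3) → Fin 3)} (hstem : JointlyExtendible T stem n (AgreesOn S))
    (hκ : ∀ π : (κ → DistinctPair) → Fin r,
      ∃ l : Subspace η DistinctPair κ, ∀ ε ε', π (l ε) = π (l ε')) :
    ∃ s ∉ S, ∃ (stem' : List ((η → Fin 3) → Fin 3)) (n' : ℕ),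
      JointlyExtendible T stem' n' (AgreesOn (insert s S)) := by
  obtain ⟨stem', π, n', hstem'⟩ := hstem.exists_separates hT hC hno
  obtain ⟨l, hl⟩ := hκ π
  let ε₀ : η → DistinctPair := fun _ => ⟨(0, 1), by decide⟩
  have hs (ε) : π (l ε) = π (l ε₀) := hl ε ε₀
  obtain ⟨h, hh⟩ := hstem' fun _ => Classical.arbitrary κ
  obtain ⟨hagrees, hsep⟩ := (mem_jointPaths_iff.1 hh).2 n' le_rfl
  refine ⟨π (l ε₀), hsep.notMem_of_agreesOn hagrees _, _, n',
    hstem'.comp_subspace (mapSubspace (fun p => p.1.1) l) ?_⟩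
  rintro b ⟨hS, hπ⟩ t ht y y'
  obtain rfl | htS := Finset.mem_insert.1 ht
  · exact hπ.apply_mapSubspace_eq hs y y'
  · exact hS t htS _ _

theorem exists_card_eq_jointlyExtendible_agreesOn (hfull : LeftFull T) (hT : TreeComputable T)
    {C : Set ℕ} (hC : ¬ REPred (· ∈ C)) (hno : ¬ HasSolutionPreserving T C) (m : ℕ) (κ : Type)
    [Finite κ] [Nonempty κ] : ∃ S : Finset (Fin r), S.card = m ∧
      ∃ (stem : List ((κ → Fin 3) → Fin 3)) (n : ℕ), JointlyExtendible T stem n (AgreesOn S) := by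
  induction m generalizing κ with
  | zero => exact ⟨∅, rfl, [], 0, LeftFull.jointlyExtendible hfull⟩
  | succ m ih =>
    obtain ⟨κ', _, _, hκ'⟩ := exists_nonempty_exists_subspace_eq κ DistinctPair (Fin r)
    obtain ⟨S, rfl, stem, n, hstem⟩ := ih κ'
    obtain ⟨s, hs, hinsert⟩ := exists_jointlyExtendible_agreesOn_insert hT hC hno hstem hκ'
    exact ⟨insert s S, Finset.card_insert_of_notMem hs, hinsert⟩

end ConstantCoordinates

end Paper

namespace Paper

/-- Cross-constraint preservation of non-Σ⁰₁ definitions: for every non-Σ⁰₁ set `C`,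
every left-full computable instance of the cross-constraint problem has a solution
relative to whose join `C` is still not Σ⁰₁. -/
theorem cc_preserves_nonSigma01 (C : Set ℕ) (hC : ¬ SigmaIn zeroO C)
    (r : ℕ) (T : CrossTree r) (hcomp : TreeComputable T) (hfull : LeftFull T) :
    ∃ (X : Fin 2 → ℕ → Fin 3) (Y : Fin 2 → Fin r → ℕ → Fin 2),
      CCSolution T X Y ∧
      ¬ SigmaIn (joinF (solOracle (X 0) (Y 0)) (solOracle (X 1) (Y 1))) C := by
  by_contra hno
  have hCre : ¬ REPred (· ∈ C) := fun hre => hC (sigmaIn_of_rePred hre zeroO)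
  obtain ⟨S, hcard, -⟩ :=
    exists_card_eq_jointlyExtendible_agreesOn hfull hcomp hCre hno (r + 1) Unit
  have hle : S.card ≤ r := by simpa using S.card_le_univ
  omega

end Paper
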